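/- Let V : [0,∞) → ℝ be a right-continuous function with left limits, of finite variation on every compact interval, with canonical decomposition V = V^c + V^d into its continuous part V^c and pure-jump part V^d. Then for every t > 0 and all bounded measurable functions f : ℝ → ℝ and g : [0,t] → ℝ, ∫_0^t f(V(s)) g(s) |V^c(ds)| = ∫_ℝ ( ∫_{[0,t]} g(s) λ^x(ds) ) f(x) dx, where for Lebesgue-almost every x the point measure λ^x(ds) places a unit atom at each time in ℐ(x) ∪ 𝒟(x). -/

import Mathlib

open MeasureTheory Set Filter
open scoped ENNReal NNReal

noncomputable section

/-- `V` increases through the level `x` at time `t`: `t > 0`, `V t = x`, `V` is continuous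
at `t` (within the domain `[0,∞)`), and `V s - V t` has the same sign as `s - t` for all
`s ≥ 0` in some neighborhood of `t`. -/
def IncreasesThrough (V : ℝ → ℝ) (x t : ℝ) : Prop :=
  0 < t ∧ V t = x ∧ ContinuousWithinAt V (Set.Ici 0) t ∧
    ∃ ε > 0, ∀ s ∈ Set.Ici (0 : ℝ), |s - t| < ε →
      ((s < t → V s < V t) ∧ (t < s → V t < V s))

/-- `V` decreases through the level `x` at time `t` iff `-V` increases through `-x` at `t`. -/
def DecreasesThrough (V : ℝ → ℝ) (x t : ℝ) : Prop :=
  IncreasesThrough (fun s => -V s) (-x) t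

/-- `(0,t] ∩ ℐ(x)`: the increasing passage times of `V` through `x` up to time `t`. -/
def incSet (V : ℝ → ℝ) (x t : ℝ) : Set ℝ :=
  {s | s ∈ Set.Ioc 0 t ∧ IncreasesThrough V x s}

/-- `(0,t] ∩ 𝒟(x)`: the decreasing passage times of `V` through `x` up to time `t`. -/
def decSet (V : ℝ → ℝ) (x t : ℝ) : Set ℝ :=
  {s | s ∈ Set.Ioc 0 t ∧ DecreasesThrough V x s}

/-- The signed local time `ℓ^x(t) = Card((0,t] ∩ ℐ(x)) − Card((0,t] ∩ 𝒟(x))`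
(meaningful when both sets are finite). -/
def signedLocalTime (V : ℝ → ℝ) (x t : ℝ) : ℤ :=
  ((incSet V x t).ncard : ℤ) - ((decSet V x t).ncard : ℤ)

/-- The absolute local time `λ^x(t) = Card((0,t] ∩ ℐ(x)) + Card((0,t] ∩ 𝒟(x))`
(meaningful when both sets are finite). -/
def absLocalTime (V : ℝ → ℝ) (x t : ℝ) : ℕ :=
  (incSet V x t).ncard + (decSet V x t).ncard

/-! Only the jumps of `V` obstruct the area formula, and they occur at countably many times.
Under the time change `s ↦ s + |V^c|(0, s]` the continuous part becomes absolutely continuous while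
the jump part stays carried by a countable set, hence singular to Lebesgue measure. The transported
path therefore has derivative `dV^c/ds` almost everywhere, and it still sends null sets to null
sets, so the area formula disintegrates `|V^c(ds)|` over the levels `x` into counting measures of
the fibers of the path. Almost every fiber avoids the points of zero or missing derivative, hence
consists of strict crossings, that is, of passage times through `x`. -/

section CountingDisintegration

variable {α β : Type*} [MeasurableSpace α] [MeasurableSpace β] {f : α → β} {μ : Measure α}
  {ν : Measure β}

/-- The measure `μ` disintegrates along `f` over `ν` into the counting measures of the fibers
of `f`. Since counting measures need not be s-finite, this is phrased through integrals of
nonnegative functions rather than through a kernel. -/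
structure IsCountingDisintegration (f : α → β) (μ : Measure α) (ν : Measure β) : Prop where
  aemeasurable_tsum ⦃H : α → ℝ≥0∞⦄ (hH : Measurable H) :
    AEMeasurable (fun y => ∑' x : f ⁻¹' {y}, H x) ν
  lintegral_eq ⦃H : α → ℝ≥0∞⦄ (hH : Measurable H) :
    ∫⁻ x, H x ∂μ = ∫⁻ y, ∑' x : f ⁻¹' {y}, H x ∂ν

namespace IsCountingDisintegration

theorem ae_forall_fiber (hf : IsCountingDisintegration f μ ν) {p : α → Prop}
    (hp : ∀ᵐ x ∂μ, p x) : ∀ᵐ y ∂ν, ∀ x, f x = y → p x := by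
  obtain ⟨N, hpN, hN, hN0⟩ := exists_measurable_superset_of_null hp
  have hH : Measurable (N.indicator (1 : α → ℝ≥0∞)) := measurable_one.indicator hN
  have hzero : ∫⁻ y, ∑' x : f ⁻¹' {y}, N.indicator 1 (x : α) ∂ν = 0 := by
    rw [← hf.lintegral_eq hH, lintegral_indicator_one hN, hN0]
  filter_upwards [(lintegral_eq_zero_iff' (hf.aemeasurable_tsum hH)).1 hzero] with y hy x hx
  by_contra hpx
  simpa [indicator_of_mem (hpN hpx)] using ENNReal.tsum_eq_zero.1 hy ⟨x, hx⟩

theorem ae_finite_fiber [IsFiniteMeasure μ] (hf : IsCountingDisintegration f μ ν) :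
    ∀ᵐ y ∂ν, (f ⁻¹' {y}).Finite := by
  have hfinite : ∫⁻ y, ∑' _ : f ⁻¹' {y}, 1 ∂ν ≠ ∞ := by
    rw [← hf.lintegral_eq measurable_const]
    simp
  filter_upwards [ae_lt_top' (hf.aemeasurable_tsum measurable_const) hfinite] with y hy
  simpa [ENNReal.tsum_one, encard_lt_top_iff] using hy

theorem comp_measurableEquiv {γ : Type*} [MeasurableSpace γ] {μ : Measure γ} {e : γ ≃ᵐ α}
    (hf : IsCountingDisintegration f (μ.map e) ν) : IsCountingDisintegration (f ∘ e) μ ν := by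
  have htsum (H : γ → ℝ≥0∞) (y : β) :
      ∑' x : f ⁻¹' {y}, H (e.symm x) = ∑' x : f ∘ e ⁻¹' {y}, H x := by
    refine (Equiv.tsum_eq (e.toEquiv.subtypeEquiv (p := (· ∈ f ∘ e ⁻¹' {y})) fun _ => Iff.rfl)
      (fun x : f ⁻¹' {y} => H (e.symm x))).symm.trans (tsum_congr fun x => ?_)
    exact congrArg H (e.symm_apply_apply x)
  refine ⟨fun H hH => ?_, fun H hH => ?_⟩
  · simpa only [Function.comp_apply, htsum] using hf.aemeasurable_tsum (hH.comp e.symm.measurable)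
  · simpa [lintegral_map_equiv, htsum] using hf.lintegral_eq (hH.comp e.symm.measurable)

theorem integral_toReal_tsum (hf : IsCountingDisintegration f μ ν) {H : α → ℝ≥0∞}
    (hH : Measurable H) (hH_int : ∫⁻ x, H x ∂μ ≠ ∞) :
    Integrable (fun y => (∑' x : f ⁻¹' {y}, H x).toReal) ν ∧
      ∫ y, (∑' x : f ⁻¹' {y}, H x).toReal ∂ν = (∫⁻ x, H x ∂μ).toReal := by
  rw [hf.lintegral_eq hH] at hH_int ⊢
  exact ⟨integrable_toReal_of_lintegral_ne_top (hf.aemeasurable_tsum hH) hH_int,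
    integral_toReal (hf.aemeasurable_tsum hH) (ae_lt_top' (hf.aemeasurable_tsum hH) hH_int)⟩

theorem integral_eq_of_measurable (hf : IsCountingDisintegration f μ ν) {h : α → ℝ}
    (hh : Measurable h) (hh_int : Integrable h μ) :
    ∫ x, h x ∂μ = ∫ y, ∑' x : f ⁻¹' {y}, h x ∂ν := by
  have hpos := hh_int.lintegral_lt_top.ne
  have hneg := hh_int.neg.lintegral_lt_top.ne
  obtain ⟨hpos_int, hpos_eq⟩ := hf.integral_toReal_tsum hh.ennreal_ofReal hpos
  obtain ⟨hneg_int, hneg_eq⟩ := hf.integral_toReal_tsum hh.neg.ennreal_ofReal hneg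
  rw [integral_eq_lintegral_pos_part_sub_lintegral_neg_part hh_int]
  refine (congrArg₂ (· - ·) hpos_eq hneg_eq).symm.trans ?_
  rw [← integral_sub hpos_int hneg_int]
  rw [hf.lintegral_eq hh.ennreal_ofReal] at hpos
  rw [hf.lintegral_eq hh.neg.ennreal_ofReal] at hneg
  refine integral_congr_ae ?_
  filter_upwards [ae_lt_top' (hf.aemeasurable_tsum hh.ennreal_ofReal) hpos,
    ae_lt_top' (hf.aemeasurable_tsum hh.neg.ennreal_ofReal) hneg] with y hpos_y hneg_y
  rw [ENNReal.tsum_toReal_eq fun _ => ENNReal.ofReal_ne_top,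
    ENNReal.tsum_toReal_eq fun _ => ENNReal.ofReal_ne_top,
    ← (ENNReal.summable_toReal hpos_y.ne).tsum_sub (ENNReal.summable_toReal hneg_y.ne)]
  simp only [ENNReal.toReal_ofReal', Pi.neg_apply, max_zero_sub_max_neg_zero_eq_self]

theorem integral_eq (hf : IsCountingDisintegration f μ ν) {h : α → ℝ} (hh : Integrable h μ) :
    ∫ x, h x ∂μ = ∫ y, ∑' x : f ⁻¹' {y}, h x ∂ν := by
  obtain ⟨k, hk, hhk⟩ := hh.aemeasurable
  rw [integral_congr_ae hhk, hf.integral_eq_of_measurable hk (hh.congr hhk)]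
  refine integral_congr_ae ?_
  filter_upwards [hf.ae_forall_fiber hhk] with y hy
  exact tsum_congr fun x => (hy x x.2).symm

end IsCountingDisintegration

end CountingDisintegration

section AreaFormula

theorem tsum_inter_fiber_of_injOn {α β : Type*} {f : α → β} {s : Set α} (hf : InjOn f s)
    (H : α → ℝ≥0∞) (y : β) :
    ∑' x : ↥(s ∩ f ⁻¹' {y}), H x = Function.extend (s.domRestrict f) (fun x => H x) 0 y := by
  by_cases hy : ∃ x : s, s.domRestrict f x = y
  · obtain ⟨x, rfl⟩ := hy
    have hfiber : s ∩ f ⁻¹' {s.domRestrict f x} = {(x : α)} := by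
      ext z
      exact ⟨fun hz => hf hz.1 x.2 hz.2, fun hz => hz ▸ ⟨x.2, rfl⟩⟩
    rw [hf.injective.extend_apply, hfiber, tsum_singleton]
  · rw [Function.extend_apply' _ _ _ hy, ENNReal.tsum_eq_zero.2]
    · rfl
    · exact fun x => absurd ⟨⟨x, x.2.1⟩, x.2.2⟩ hy

theorem tsum_iUnion_inter_fiber {ι α β : Type*} {f : α → β} {t : ι → Set α}
    (ht : Pairwise (Function.onFun Disjoint t)) (H : α → ℝ≥0∞) (y : β) :
    ∑' x : ↥((⋃ i, t i) ∩ f ⁻¹' {y}), H x = ∑' i, ∑' x : ↥(t i ∩ f ⁻¹' {y}), H x := by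
  rw [iUnion_inter]
  exact ENNReal.tsum_biUnion fun i _ j _ hij =>
    (ht hij).mono inter_subset_left inter_subset_left

variable {E : Type*} [NormedAddCommGroup E] [NormedSpace ℝ E] [FiniteDimensional ℝ E]

theorem exists_ne_zero_approximatesLinearOn_injOn (A : E →L[ℝ] E) :
    ∃ c : ℝ≥0, c ≠ 0 ∧ (A.det ≠ 0 → ∀ (f : E → E) (s : Set E),
      ApproximatesLinearOn f A s c → InjOn f s) := by
  by_cases hA : A.det = 0
  · exact ⟨1, one_ne_zero, fun h => absurd hA h⟩
  obtain hE | hE := subsingleton_or_nontrivial E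
  · exact ⟨1, one_ne_zero, fun _ f s _ => injOn_of_subsingleton f s⟩
  set e := A.toContinuousLinearEquivOfDetNeZero hA
  have heA : (e : E →L[ℝ] E) = A := A.coe_toContinuousLinearEquivOfDetNeZero hA
  have hpos : 0 < ‖(e.symm : E →L[ℝ] E)‖₊⁻¹ := inv_pos.2 e.nnnorm_symm_pos
  refine ⟨‖(e.symm : E →L[ℝ] E)‖₊⁻¹ / 2, (half_pos hpos).ne', fun _ f s hf => ?_⟩
  rw [← heA] at hf
  exact hf.injOn (Or.inr (half_lt_self hpos))

variable [MeasurableSpace E] [BorelSpace E] {f : E → E} {f' : E → E →L[ℝ] E} {s : Set E}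

theorem exists_measurable_partition_injOn (hs : MeasurableSet s)
    (hf' : ∀ x ∈ s, HasFDerivWithinAt f (f' x) s x) (hdet : ∀ x ∈ s, (f' x).det ≠ 0) :
    ∃ t : ℕ → Set E, Pairwise (Function.onFun Disjoint t) ∧ (∀ n, MeasurableSet (t n)) ∧
      ⋃ n, t n = s ∧ ∀ n, InjOn f (t n) := by
  obtain rfl | hne := s.eq_empty_or_nonempty
  · exact ⟨fun _ => ∅, fun _ _ _ => disjoint_bot_left, by simp, by simp, by simp⟩
  choose r hr hr_inj using exists_ne_zero_approximatesLinearOn_injOn (E := E)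
  obtain ⟨t, A, hdisj, hmeas, hcover, happrox, hA⟩ :=
    exists_partition_approximatesLinearOn_of_hasFDerivWithinAt f s f' hf' r hr
  refine ⟨fun n => s ∩ t n, fun i j hij => (hdisj hij).mono inter_subset_right inter_subset_right,
    fun n => hs.inter (hmeas n), by rw [← inter_iUnion, inter_eq_left.2 hcover], fun n => ?_⟩
  obtain ⟨y, hy, hAy⟩ := hA hne n
  exact hr_inj (A n) (hAy ▸ hdet y hy) f _ (happrox n)

theorem measurable_tsum_inter_fiber_of_injOn (hs : MeasurableSet s)
    (hf' : ∀ x ∈ s, HasFDerivWithinAt f (f' x) s x) (hf : InjOn f s) {H : E → ℝ≥0∞}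
    (hH : Measurable H) : Measurable fun y => ∑' x : ↥(s ∩ f ⁻¹' {y}), H x := by
  simp only [tsum_inter_fiber_of_injOn hf]
  exact (measurableEmbedding_of_fderivWithin hs hf' hf).measurable_extend
    (hH.comp measurable_subtype_coe) measurable_zero

theorem measurable_tsum_inter_fiber (hs : MeasurableSet s)
    (hf' : ∀ x ∈ s, HasFDerivWithinAt f (f' x) s x) (hdet : ∀ x ∈ s, (f' x).det ≠ 0)
    {H : E → ℝ≥0∞} (hH : Measurable H) : Measurable fun y => ∑' x : ↥(s ∩ f ⁻¹' {y}), H x := by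
  obtain ⟨t, hdisj, ht, rfl, hinj⟩ := exists_measurable_partition_injOn hs hf' hdet
  simp only [tsum_iUnion_inter_fiber hdisj]
  exact Measurable.tsum fun n => measurable_tsum_inter_fiber_of_injOn (ht n)
    (fun x hx => (hf' x (mem_iUnion_of_mem n hx)).mono (subset_iUnion t n)) (hinj n) hH

variable (μ : Measure E) [μ.IsAddHaarMeasure]

theorem setLIntegral_abs_det_fderiv_mul_eq_of_injOn (hs : MeasurableSet s)
    (hf' : ∀ x ∈ s, HasFDerivWithinAt f (f' x) s x) (hf : InjOn f s) (H : E → ℝ≥0∞) :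
    ∫⁻ x in s, ENNReal.ofReal |(f' x).det| * H x ∂μ =
      ∫⁻ y, ∑' x : ↥(s ∩ f ⁻¹' {y}), H x ∂μ := by
  have hsupport : (Function.support fun y => ∑' x : ↥(s ∩ f ⁻¹' {y}), H x) ⊆ f '' s := by
    intro y hy
    obtain ⟨x, -⟩ := not_forall.1 (mt ENNReal.tsum_eq_zero.2 hy)
    exact ⟨x, x.2⟩
  rw [← setLIntegral_eq_of_support_subset hsupport,
    lintegral_image_eq_lintegral_abs_det_fderiv_mul μ hs hf' hf]
  refine setLIntegral_congr_fun hs fun x hx => ?_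
  have hext := hf.injective.extend_apply (fun x : s => H x) 0 ⟨x, hx⟩
  simp only [tsum_inter_fiber_of_injOn hf]
  exact congrArg _ hext.symm

theorem setLIntegral_abs_det_fderiv_mul_eq (hs : MeasurableSet s)
    (hf' : ∀ x ∈ s, HasFDerivWithinAt f (f' x) s x) (hdet : ∀ x ∈ s, (f' x).det ≠ 0)
    {H : E → ℝ≥0∞} (hH : Measurable H) :
    ∫⁻ x in s, ENNReal.ofReal |(f' x).det| * H x ∂μ =
      ∫⁻ y, ∑' x : ↥(s ∩ f ⁻¹' {y}), H x ∂μ := by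
  obtain ⟨t, hdisj, ht, rfl, hinj⟩ := exists_measurable_partition_injOn hs hf' hdet
  have hf't (n : ℕ) (x) (hx : x ∈ t n) : HasFDerivWithinAt f (f' x) (t n) x :=
    (hf' x (mem_iUnion_of_mem n hx)).mono (subset_iUnion t n)
  simp only [tsum_iUnion_inter_fiber hdisj]
  rw [lintegral_iUnion ht hdisj, lintegral_tsum fun n =>
    (measurable_tsum_inter_fiber_of_injOn (ht n) (hf't n) (hinj n) hH).aemeasurable]
  exact tsum_congr fun n =>
    setLIntegral_abs_det_fderiv_mul_eq_of_injOn μ (ht n) (hf't n) (hinj n) H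

theorem ae_forall_fiber_det_fderiv_ne_zero (hf : ∀ᵐ x ∂μ, DifferentiableAt ℝ f x)
    (hnull : ∀ s, μ s = 0 → μ (f '' s) = 0) :
    ∀ᵐ y ∂μ, ∀ x, f x = y → DifferentiableAt ℝ f x ∧ (fderiv ℝ f x).det ≠ 0 := by
  set s := {x | DifferentiableAt ℝ f x ∧ (fderiv ℝ f x).det = 0}
  have hcritical : μ (f '' s) = 0 := addHaar_image_eq_zero_of_det_fderivWithin_eq_zero μ
    (fun x hx => hx.1.hasFDerivAt.hasFDerivWithinAt) fun x hx => hx.2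
  filter_upwards [measure_eq_zero_iff_ae_notMem.1 hcritical,
    measure_eq_zero_iff_ae_notMem.1 (hnull {x | ¬ DifferentiableAt ℝ f x} hf)]
    with y hy_critical hy_nondiff x hx
  have hx_diff : DifferentiableAt ℝ f x := by_contra fun h => hy_nondiff ⟨x, h, hx⟩
  exact ⟨hx_diff, fun h => hy_critical ⟨x, ⟨hx_diff, h⟩, hx⟩⟩

theorem isCountingDisintegration_of_ae_differentiableAt (hf : ∀ᵐ x ∂μ, DifferentiableAt ℝ f x)
    (hnull : ∀ s, μ s = 0 → μ (f '' s) = 0) :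
    IsCountingDisintegration f (μ.withDensity fun x => ENNReal.ofReal |(fderiv ℝ f x).det|) μ := by
  have hdet_meas : Measurable fun x => (fderiv ℝ f x).det :=
    ContinuousLinearMap.continuous_det.measurable.comp (measurable_fderiv ℝ f)
  set s := {x | DifferentiableAt ℝ f x ∧ (fderiv ℝ f x).det ≠ 0}
  have hs : MeasurableSet s := (measurableSet_of_differentiableAt ℝ f).inter
    (hdet_meas (measurableSet_singleton 0).compl)
  have hf' (x) (hx : x ∈ s) : HasFDerivWithinAt f (fderiv ℝ f x) s x :=
    hx.1.hasFDerivAt.hasFDerivWithinAt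
  have htsum (H : E → ℝ≥0∞) : (fun y => ∑' x : ↥(s ∩ f ⁻¹' {y}), H x) =ᵐ[μ]
      fun y => ∑' x : f ⁻¹' {y}, H x := by
    filter_upwards [ae_forall_fiber_det_fderiv_ne_zero μ hf hnull] with y hy
    rw [inter_eq_right.2 (show f ⁻¹' {y} ⊆ s from hy)]
  refine ⟨fun H hH => ?_, fun H hH => ?_⟩
  · exact (measurable_tsum_inter_fiber hs hf' (fun x hx => hx.2) hH).aemeasurable.congr (htsum H)
  · rw [← lintegral_congr_ae (htsum H),
      ← setLIntegral_abs_det_fderiv_mul_eq μ hs hf' (fun x hx => hx.2) hH,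
      lintegral_withDensity_eq_lintegral_mul _ (by fun_prop) hH, ← lintegral_indicator hs]
    refine lintegral_congr_ae (hf.mono fun x hx => ?_)
    by_cases hx_det : (fderiv ℝ f x).det = 0
    · rw [indicator_of_notMem fun hxs : x ∈ s => hxs.2 hx_det]
      simp [hx_det]
    · rw [indicator_of_mem (show x ∈ s from ⟨hx, hx_det⟩)]
      rfl

theorem isCountingDisintegration_withDensity_enorm_deriv {f φ : ℝ → ℝ}
    (hf : ∀ᵐ x, HasDerivAt f (φ x) x) (hnull : ∀ s, volume s = 0 → volume (f '' s) = 0) :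
    IsCountingDisintegration f (volume.withDensity (‖φ ·‖ₑ)) volume := by
  have hdensity : (fun x => ENNReal.ofReal |(fderiv ℝ f x).det|) =ᵐ[volume] (‖φ ·‖ₑ) := by
    filter_upwards [hf] with x hx
    simp [hx.hasFDerivAt.fderiv, Real.enorm_eq_ofReal_abs]
  rw [← withDensity_congr_ae hdensity]
  exact isCountingDisintegration_of_ae_differentiableAt volume
    (hf.mono fun x hx => hx.differentiableAt) hnull

end AreaFormula

section CumulativeFunction

/-- The distribution function `s ↦ m (-∞, s]` of a finite measure, as a Stieltjes function. -/
def distributionFunction (m : Measure ℝ) [IsFiniteMeasure m] : StieltjesFunction ℝ where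
  toFun s := m.real (Iic s)
  mono' _ _ hab := measureReal_mono (Iic_subset_Iic.2 hab)
  right_continuous' s := by
    have htendsto :
        Tendsto (fun r => m (Iic r)) (nhdsWithin s (Ioi s)) (nhds (m (⋂ r > s, Iic r))) :=
      tendsto_measure_biInter_gt (fun _ _ => measurableSet_Iic.nullMeasurableSet)
        (fun _ _ _ hij => Iic_subset_Iic.2 hij) ⟨s + 1, by simp, measure_ne_top _ _⟩
    have hInter : ⋂ r > s, Iic r = Iic s := by
      ext r
      simpa using ⟨le_of_forall_gt_imp_ge_of_dense, fun h q hq => h.trans hq.le⟩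
    rw [hInter] at htendsto
    rw [← continuousWithinAt_Ioi_iff_Ici]
    exact (ENNReal.tendsto_toReal (measure_ne_top _ _)).comp htendsto

theorem distributionFunction_apply (m : Measure ℝ) [IsFiniteMeasure m] (s : ℝ) :
    distributionFunction m s = m.real (Iic s) := rfl

theorem distributionFunction_sub (m : Measure ℝ) [IsFiniteMeasure m] {a b : ℝ} (hab : a ≤ b) :
    distributionFunction m b - distributionFunction m a = m.real (Ioc a b) := by
  rw [distributionFunction_apply, distributionFunction_apply, ← Iic_union_Ioc_eq_Iic hab,
    measureReal_union (Iic_disjoint_Ioc le_rfl) measurableSet_Ioc, add_sub_cancel_left]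

theorem measure_distributionFunction (m : Measure ℝ) [IsFiniteMeasure m] :
    (distributionFunction m).measure = m := by
  refine Measure.ext_of_Ioc _ _ fun a b hab => ?_
  rw [StieltjesFunction.measure_Ioc, distributionFunction_sub m hab.le, ofReal_measureReal]

theorem continuous_distributionFunction (m : Measure ℝ) [IsFiniteMeasure m]
    [NullSingletonClass m] : Continuous (distributionFunction m) := by
  refine continuous_iff_continuousAt.2 fun s => ?_
  have hjump : (distributionFunction m).measure {s} = 0 := by simp [measure_distributionFunction]
  rw [StieltjesFunction.measure_singleton, ENNReal.ofReal_eq_zero, sub_nonpos] at hjump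
  rw [(distributionFunction m).mono.continuousAt_iff_leftLim_eq_rightLim,
    StieltjesFunction.rightLim_eq]
  exact ((distributionFunction m).mono.leftLim_le le_rfl).antisymm hjump

theorem volume_image_le_stieltjesFunction_measure {W : ℝ → ℝ} {F : StieltjesFunction ℝ}
    (hW : ∀ a b, a ≤ b → |W b - W a| ≤ F b - F a) (s : Set ℝ) :
    volume (W '' s) ≤ F.measure s := by
  suffices OuterMeasure.comap W (volume : Measure ℝ).toOuterMeasure ≤ F.outer by
    rw [StieltjesFunction.measure]
    exact this s
  refine OuterMeasure.le_ofFunction.2 fun u => ?_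
  rw [StieltjesFunction.length_eq]
  refine le_iInf fun a => le_iInf fun b => le_iInf fun hu => ?_
  have hu_Ioc : u ⊆ Ioc a b := by simpa [botSet] using hu
  refine (Real.volume_le_diam (W '' u)).trans (Metric.ediam_le ?_)
  suffices ∀ x ∈ u, ∀ y ∈ u, x ≤ y → edist (W x) (W y) ≤ ENNReal.ofReal (F b - F a) by
    rintro _ ⟨x, hx, rfl⟩ _ ⟨y, hy, rfl⟩
    obtain hxy | hyx := le_total x y
    · exact this x hx y hy hxy
    · exact edist_comm (W y) (W x) ▸ this y hy x hx hyx
  intro x hx y hy hxy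
  rw [edist_comm, edist_dist, Real.dist_eq]
  exact ENNReal.ofReal_le_ofReal <| (hW x y hxy).trans <|
    sub_le_sub (F.mono (hu_Ioc hy).2) (F.mono (hu_Ioc hx).1.le)

/-- The cumulative function `s ↦ ν (-∞, s]` of a signed measure. -/
def cumulative (ν : SignedMeasure ℝ) (s : ℝ) : ℝ := ν (Iic s)

variable (ν : SignedMeasure ℝ)

theorem cumulative_add (ν ν' : SignedMeasure ℝ) (s : ℝ) :
    cumulative (ν + ν') s = cumulative ν s + cumulative ν' s := rfl

theorem cumulative_sub_cumulative {a b : ℝ} (hab : a ≤ b) :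
    cumulative ν b - cumulative ν a = ν (Ioc a b) := by
  rw [cumulative, cumulative, ← Iic_union_Ioc_eq_Iic hab,
    VectorMeasure.of_union (Iic_disjoint_Ioc le_rfl) measurableSet_Iic measurableSet_Ioc,
    add_sub_cancel_left]

theorem cumulative_eq_distributionFunction_sub : cumulative ν = fun s =>
    distributionFunction ν.toJordanDecomposition.posPart s -
      distributionFunction ν.toJordanDecomposition.negPart s :=
  funext fun _ => ν.apply_eq_posPart_real_sub_negPart_real measurableSet_Iic

theorem ae_hasDerivAt_cumulative :
    ∀ᵐ s, HasDerivAt (cumulative ν) (ν.rnDeriv volume s) s := by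
  have hderiv (m : Measure ℝ) [IsFiniteMeasure m] :
      ∀ᵐ s, HasDerivAt (distributionFunction m) (m.rnDeriv volume s).toReal s := by
    simpa only [measure_distributionFunction] using (distributionFunction m).ae_hasDerivAt
  rw [cumulative_eq_distributionFunction_sub, SignedMeasure.rnDeriv_def]
  filter_upwards [hderiv ν.toJordanDecomposition.posPart,
    hderiv ν.toJordanDecomposition.negPart] with s hpos hneg using hpos.sub hneg

theorem volume_image_const_add_cumulative_le (c : ℝ) (s : Set ℝ) :
    volume ((fun r => c + cumulative ν r) '' s) ≤ ν.variation s := by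
  rw [← SignedMeasure.totalVariation_eq_variation,
    ← measure_distributionFunction ν.totalVariation]
  refine volume_image_le_stieltjesFunction_measure (fun a b hab => ?_) s
  rw [add_sub_add_left_eq_sub, cumulative_sub_cumulative ν hab, distributionFunction_sub _ hab]
  exact ν.norm_le_totalVariation _

theorem apply_singleton_eq_zero_of_continuousAt_cumulative {s : ℝ}
    (hs : ContinuousAt (cumulative ν) s) : ν {s} = 0 := by
  obtain ⟨u, hu_mono, hu_lt, hu⟩ := exists_seq_strictMono_tendsto s
  have hInter : ⋂ n, Ioc (u n) s = {s} := by
    ext r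
    simp only [mem_iInter, mem_Ioc, mem_singleton_iff]
    exact ⟨fun h => (h 0).2.antisymm (le_of_tendsto' hu fun n => (h n).1.le),
      fun h n => h.symm ▸ ⟨hu_lt n, le_rfl⟩⟩
  have hν := VectorMeasure.tendsto_vectorMeasure_iInter_atTop_nat
    (v := ν) (s := fun n => Ioc (u n) s)
    (fun _ _ hmn => Ioc_subset_Ioc_left (hu_mono.monotone hmn)) fun _ => measurableSet_Ioc
  rw [hInter] at hν
  have hlim := (tendsto_const_nhds (x := cumulative ν s)).sub (hs.tendsto.comp hu)
  rw [sub_self] at hlim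
  exact tendsto_nhds_unique hν
    (hlim.congr fun n => cumulative_sub_cumulative ν (hu_lt n).le)

theorem nullSingletonClass_variation_of_continuous_cumulative (hν : Continuous (cumulative ν)) :
    NullSingletonClass ν.variation := by
  refine ⟨fun s => (VectorMeasure.variation_apply_eq_zero (measurableSet_singleton s)).2
    fun t ht _ => ?_⟩
  obtain rfl | rfl := subset_singleton_iff_eq.1 ht
  · exact ν.empty
  · exact apply_singleton_eq_zero_of_continuousAt_cumulative ν hν.continuousAt

end CumulativeFunction

section Crossing

/-- `W` is continuous at `s` and crosses the value `W s` strictly upwards there. -/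
def IncreasesAt (W : ℝ → ℝ) (s : ℝ) : Prop :=
  ContinuousAt W s ∧ ∀ᶠ r in nhds s, (r < s → W r < W s) ∧ (s < r → W s < W r)

/-- `W` is continuous at `s` and crosses the value `W s` strictly upwards or strictly downwards
there. -/
def CrossesAt (W : ℝ → ℝ) (s : ℝ) : Prop :=
  IncreasesAt W s ∨ IncreasesAt (-W) s

variable {W W' : ℝ → ℝ} {s : ℝ}

theorem IncreasesAt.congr (hW : IncreasesAt W s) (h : W =ᶠ[nhds s] W') : IncreasesAt W' s := by
  refine ⟨hW.1.congr h, ?_⟩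
  filter_upwards [hW.2, h] with r hr hr_eq
  rwa [← hr_eq, ← h.eq_of_nhds]

theorem CrossesAt.congr (hW : CrossesAt W s) (h : W =ᶠ[nhds s] W') : CrossesAt W' s :=
  hW.imp (·.congr h) (·.congr h.neg)

theorem IncreasesAt.comp_orderIso {G : ℝ ≃o ℝ} (hW : IncreasesAt W (G s)) :
    IncreasesAt (W ∘ G) s := by
  refine ⟨hW.1.comp G.continuous.continuousAt, ?_⟩
  filter_upwards [G.continuous.continuousAt.eventually hW.2] with r hr
  simpa only [Function.comp_apply, G.lt_iff_lt] using hr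

theorem CrossesAt.comp_orderIso {G : ℝ ≃o ℝ} (hW : CrossesAt W (G s)) : CrossesAt (W ∘ G) s :=
  hW.imp IncreasesAt.comp_orderIso IncreasesAt.comp_orderIso

theorem increasesAt_of_hasDerivAt {d : ℝ} (hW : HasDerivAt W d s) (hd : 0 < d) :
    IncreasesAt W s := by
  refine ⟨hW.continuousAt, ?_⟩
  have hslope := (hasDerivAt_iff_tendsto_slope.1 hW).eventually_const_lt hd
  filter_upwards [eventually_nhdsWithin_iff.1 hslope] with r hr
  exact ⟨fun hrs => (slope_pos_iff_gt hrs).1 (hr hrs.ne),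
    fun hsr => (slope_pos_iff hsr).1 (hr hsr.ne')⟩

theorem crossesAt_of_hasDerivAt {d : ℝ} (hW : HasDerivAt W d s) (hd : d ≠ 0) :
    CrossesAt W s :=
  hd.lt_or_gt.symm.imp (increasesAt_of_hasDerivAt hW)
    fun hneg => increasesAt_of_hasDerivAt hW.neg (neg_pos.2 hneg)

theorem increasesThrough_iff {V : ℝ → ℝ} {x s : ℝ} (hs : 0 < s) :
    IncreasesThrough V x s ↔ V s = x ∧ IncreasesAt V s := by
  have hnhds : Ici (0 : ℝ) ∈ nhds s := Ici_mem_nhds hs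
  rw [IncreasesThrough, continuousWithinAt_iff_continuousAt hnhds, and_iff_right hs]
  refine and_congr_right fun _ => and_congr_right fun _ => ⟨fun ⟨ε, hε, h⟩ => ?_, fun h => ?_⟩
  · filter_upwards [hnhds, Metric.ball_mem_nhds s hε] with r hr0 hrε using h r hr0 hrε
  · obtain ⟨ε, hε, hball⟩ := Metric.eventually_nhds_iff_ball.1 h
    exact ⟨ε, hε, fun r _ hrε => hball r hrε⟩

theorem incSet_union_decSet (V : ℝ → ℝ) (x t : ℝ) :
    incSet V x t ∪ decSet V x t = {s ∈ Ioc 0 t | V s = x ∧ CrossesAt V s} := by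
  ext s
  refine (and_or_left (a := s ∈ Ioc 0 t)).symm.trans (and_congr_right fun hs => ?_)
  rw [DecreasesThrough, increasesThrough_iff hs.1, increasesThrough_iff hs.1, neg_inj,
    ← and_or_left]
  rfl

end Crossing

section AbsolutelyContinuous

variable {δ α : SignedMeasure ℝ} {C : Set ℝ}

theorem volume_image_const_add_cumulative_add_eq_zero (hC : C.Countable)
    (hδ : δ.variation Cᶜ = 0) (c : ℝ) {N : Set ℝ} (hN : α.variation N = 0) :
    volume ((fun r => c + cumulative (δ + α) r) '' N) = 0 := by
  set W := fun r => c + cumulative (δ + α) r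
  have hcountable : volume (W '' C) = 0 := (hC.image W).measure_zero volume
  have hdiff : volume (W '' (N \ C)) = 0 := by
    refine le_antisymm ?_ zero_le
    calc volume (W '' (N \ C)) ≤ (δ + α).variation (N \ C) :=
          volume_image_const_add_cumulative_le _ _ _
      _ ≤ δ.variation (N \ C) + α.variation (N \ C) := VectorMeasure.variation_add_le _
      _ = 0 := by
        rw [measure_mono_null (fun r hr => hr.2) hδ, measure_mono_null sdiff_subset hN, add_zero]
  refine measure_mono_null ?_ (measure_union_null hcountable hdiff)
  rw [← image_union, union_sdiff_self]
  exact image_mono subset_union_right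

theorem withDensityᵥ_rnDeriv_of_variation_absolutelyContinuous (hα : α.variation ≪ volume) :
    volume.withDensityᵥ (α.rnDeriv volume) = α := by
  refine SignedMeasure.withDensityᵥ_rnDeriv_eq α volume
    (VectorMeasure.AbsolutelyContinuous.mk fun S hS hS0 => ?_)
  rw [Measure.toENNRealVectorMeasure_apply_measurable hS] at hS0
  simpa [hα hS0] using α.enorm_measure_le_variation S

theorem mutuallySingular_volume_of_variation_compl_eq_zero (hC : C.Countable)
    (hδ : δ.variation Cᶜ = 0) : δ ⟂ᵥ (volume : Measure ℝ).toENNRealVectorMeasure := by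
  refine VectorMeasure.MutuallySingular.mk Cᶜ hC.measurableSet.compl (fun S hS _ => ?_)
    fun S hS hS_meas => ?_
  · simpa [measure_mono_null hS hδ] using δ.enorm_measure_le_variation S
  · rw [compl_compl] at hS
    rw [Measure.toENNRealVectorMeasure_apply_measurable hS_meas]
    exact (hC.mono hS).measure_zero volume

theorem ae_hasDerivAt_const_add_cumulative_add (hC : C.Countable) (hδ : δ.variation Cᶜ = 0)
    (hα : α.variation ≪ volume) (c : ℝ) :
    ∀ᵐ s, HasDerivAt (fun r => c + cumulative (δ + α) r) (α.rnDeriv volume s) s := by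
  have hrnDeriv : α.rnDeriv volume =ᵐ[volume] (δ + α).rnDeriv volume :=
    SignedMeasure.eq_rnDeriv _ _ (SignedMeasure.integrable_rnDeriv _ _)
      (mutuallySingular_volume_of_variation_compl_eq_zero hC hδ)
      (by rw [withDensityᵥ_rnDeriv_of_variation_absolutelyContinuous hα])
  filter_upwards [hrnDeriv, ae_hasDerivAt_cumulative (δ + α)] with s hs hderiv
  exact (hs ▸ hderiv).const_add c

theorem variation_eq_withDensity_enorm_rnDeriv (hα : α.variation ≪ volume) :
    α.variation = volume.withDensity (‖α.rnDeriv volume ·‖ₑ) := by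
  rw [← Measure.variation_withDensityᵥ (SignedMeasure.integrable_rnDeriv _ _),
    withDensityᵥ_rnDeriv_of_variation_absolutelyContinuous hα]

theorem isCountingDisintegration_cumulative_of_absolutelyContinuous (hC : C.Countable)
    (hδ : δ.variation Cᶜ = 0) (hα : α.variation ≪ volume) (c : ℝ) :
    IsCountingDisintegration (fun r => c + cumulative (δ + α) r) α.variation volume := by
  rw [variation_eq_withDensity_enorm_rnDeriv hα]
  exact isCountingDisintegration_withDensity_enorm_deriv
    (ae_hasDerivAt_const_add_cumulative_add hC hδ hα c)
    fun N hN => volume_image_const_add_cumulative_add_eq_zero hC hδ c (hα hN)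

theorem ae_crossesAt_cumulative_of_absolutelyContinuous (hC : C.Countable)
    (hδ : δ.variation Cᶜ = 0) (hα : α.variation ≪ volume) (c : ℝ) :
    ∀ᵐ s ∂α.variation, CrossesAt (fun r => c + cumulative (δ + α) r) s := by
  rw [variation_eq_withDensity_enorm_rnDeriv hα,
    ae_withDensity_iff' (SignedMeasure.measurable_rnDeriv _ _).enorm.aemeasurable]
  filter_upwards [ae_hasDerivAt_const_add_cumulative_add hC hδ hα c] with s hderiv hne
  exact crossesAt_of_hasDerivAt hderiv (enorm_ne_zero.1 hne)

end AbsolutelyContinuous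

section TimeChange

/-- The time change `s ↦ s + τ (-∞, s]` attached to a finite atomless measure `τ`: it transports
`volume + τ` to `volume`, hence makes every measure dominated by `τ` absolutely continuous. -/
def timeChange (τ : Measure ℝ) [IsFiniteMeasure τ] [NullSingletonClass τ] : ℝ ≃o ℝ :=
  StrictMono.orderIsoOfSurjective (fun s => s + distributionFunction τ s)
    (strictMono_id.add_monotone (distributionFunction τ).mono)
    ((continuous_id.add (continuous_distributionFunction τ)).surjective
      (tendsto_atTop_add_right_of_le _ 0 tendsto_id fun _ => measureReal_nonneg)
      (tendsto_atBot_add_right_of_ge _ (τ.real univ) tendsto_id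
        fun _ => measureReal_mono (subset_univ _)))

variable (τ : Measure ℝ) [IsFiniteMeasure τ] [NullSingletonClass τ]

theorem timeChange_apply (s : ℝ) : timeChange τ s = s + distributionFunction τ s := rfl

theorem map_timeChange_volume_add : (volume + τ).map (timeChange τ) = volume := by
  refine (Measure.ext_of_Ioc _ _ fun a b hab => ?_).symm
  obtain ⟨a, rfl⟩ := (timeChange τ).surjective a
  obtain ⟨b, rfl⟩ := (timeChange τ).surjective b
  have hab_le : a ≤ b := ((timeChange τ).lt_iff_lt.1 hab).le
  rw [Measure.map_apply (timeChange τ).continuous.measurable measurableSet_Ioc,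
    OrderIso.preimage_Ioc, OrderIso.symm_apply_apply, OrderIso.symm_apply_apply,
    Measure.add_apply, Real.volume_Ioc, Real.volume_Ioc, timeChange_apply, timeChange_apply,
    ← ofReal_measureReal (μ := τ), ← distributionFunction_sub τ hab_le,
    ← ENNReal.ofReal_add (sub_nonneg.2 hab_le)
      (sub_nonneg.2 ((distributionFunction τ).mono hab_le)), add_sub_add_comm]

theorem map_timeChange_absolutelyContinuous : τ.map (timeChange τ) ≪ volume := by
  have hle : τ.map (timeChange τ) ≤ (volume + τ).map (timeChange τ) :=
    Measure.map_mono (Measure.le_add_left le_rfl) (timeChange τ).continuous.measurable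
  rw [map_timeChange_volume_add] at hle
  exact hle.absolutelyContinuous

theorem cumulative_map_orderIso (ν : SignedMeasure ℝ) (G : ℝ ≃o ℝ) (s : ℝ) :
    cumulative (ν.map G) (G s) = cumulative ν s := by
  rw [cumulative, VectorMeasure.map_apply ν G.continuous.measurable measurableSet_Iic,
    OrderIso.preimage_Iic, OrderIso.symm_apply_apply, cumulative]

theorem variation_map_orderIso (ν : SignedMeasure ℝ) (G : ℝ ≃o ℝ) :
    (ν.map G).variation = ν.variation.map G :=
  G.toHomeomorph.measurableEmbedding.variation_map

end TimeChange

section Cumulative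

variable {δ α : SignedMeasure ℝ} {C : Set ℝ}

theorem const_add_cumulative_map_comp (G : ℝ ≃o ℝ) (c : ℝ) :
    (fun r => c + cumulative (δ.map G + α.map G) r) ∘ G = fun r => c + cumulative (δ + α) r := by
  ext r
  simp only [Function.comp_apply, cumulative_add, cumulative_map_orderIso]

theorem variation_map_image_compl_eq_zero (hδ : δ.variation Cᶜ = 0) (G : ℝ ≃o ℝ) :
    (δ.map G).variation (G '' C)ᶜ = 0 := by
  rw [variation_map_orderIso]
  refine (G.toHomeomorph.measurableEmbedding.map_apply _ _).trans ?_
  rwa [OrderIso.coe_toHomeomorph, preimage_compl, preimage_image_eq C G.injective]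

variable [NullSingletonClass α.variation]

theorem exists_orderIso_variation_map_absolutelyContinuous :
    ∃ G : ℝ ≃o ℝ, (α.map G).variation ≪ volume := by
  have : IsFiniteMeasure α.variation := α.totalVariation_eq_variation ▸ inferInstance
  refine ⟨timeChange α.variation, ?_⟩
  rw [variation_map_orderIso]
  exact map_timeChange_absolutelyContinuous α.variation

theorem isCountingDisintegration_cumulative (hC : C.Countable) (hδ : δ.variation Cᶜ = 0) (c : ℝ) :
    IsCountingDisintegration (fun r => c + cumulative (δ + α) r) α.variation volume := by
  obtain ⟨G, hG⟩ := exists_orderIso_variation_map_absolutelyContinuous (α := α)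
  have hmap := isCountingDisintegration_cumulative_of_absolutelyContinuous (hC.image G)
    (variation_map_image_compl_eq_zero hδ G) hG c
  rw [variation_map_orderIso] at hmap
  rw [← const_add_cumulative_map_comp G]
  exact hmap.comp_measurableEquiv (e := G.toHomeomorph.toMeasurableEquiv)

theorem ae_crossesAt_cumulative (hC : C.Countable) (hδ : δ.variation Cᶜ = 0) (c : ℝ) :
    ∀ᵐ s ∂α.variation, CrossesAt (fun r => c + cumulative (δ + α) r) s := by
  obtain ⟨G, hG⟩ := exists_orderIso_variation_map_absolutelyContinuous (α := α)
  have hmap := ae_crossesAt_cumulative_of_absolutelyContinuous (hC.image G)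
    (variation_map_image_compl_eq_zero hδ G) hG c
  rw [variation_map_orderIso] at hmap
  filter_upwards [ae_of_ae_map G.continuous.aemeasurable hmap] with s hs
  exact const_add_cumulative_map_comp (δ := δ) (α := α) G c ▸ hs.comp_orderIso

end Cumulative

section AtomicMeasure

variable {X : Type*} [MeasurableSpace X] [MeasurableSingletonClass X] {J : X → ℝ}

theorem withDensityᵥ_count_apply (hJ : Summable J) {A : Set X} (hA : MeasurableSet A) :
    Measure.count.withDensityᵥ J A = ∑' x : A, J x := by
  have hJ_int : Integrable J Measure.count := integrable_count_iff.2 hJ.norm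
  rw [withDensityᵥ_apply hJ_int hA, ← integral_indicator hA, Measure.count,
    integral_sum_measure (hJ_int.indicator hA)]
  simp only [integral_dirac]
  exact (tsum_subtype A J).symm

theorem variation_withDensityᵥ_count_support_compl (hJ : Summable J) :
    (Measure.count.withDensityᵥ J).variation (Function.support J)ᶜ = 0 := by
  have hsupport : MeasurableSet (Function.support J)ᶜ := hJ.countable_support.measurableSet.compl
  rw [Measure.variation_withDensityᵥ (integrable_count_iff.2 hJ.norm),
    withDensity_apply _ hsupport]
  exact setLIntegral_eq_zero hsupport fun x hx => enorm_eq_zero.2 (Function.notMem_support.1 hx)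

end AtomicMeasure

section Passages

variable {V : ℝ → ℝ} {c t : ℝ} {δ α : SignedMeasure ℝ} {C : Set ℝ}

theorem Iic_inter_Ioc_eq_Ioc_projIcc {a b : ℝ} (hab : a ≤ b) (s : ℝ) :
    Iic s ∩ Ioc a b = Ioc a (projIcc a b hab s) := by
  ext r
  simp only [coe_projIcc, mem_inter_iff, mem_Iic, mem_Ioc, le_max_iff, le_min_iff]
  grind

theorem cumulative_restrict_Ioc (ν : SignedMeasure ℝ) {a b : ℝ} (hab : a ≤ b) (s : ℝ) :
    cumulative (ν.restrict (Ioc a b)) s = ν (Ioc a (projIcc a b hab s)) := by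
  rw [cumulative, ν.restrict_apply measurableSet_Ioc measurableSet_Iic,
    Iic_inter_Ioc_eq_Ioc_projIcc hab]

theorem cumulative_withDensityᵥ_count_indicator {J : ℝ → ℝ} {a b : ℝ} (hab : a ≤ b)
    (hJ : Summable ((Ioc a b).indicator J)) (s : ℝ) :
    cumulative (Measure.count.withDensityᵥ ((Ioc a b).indicator J)) s =
      ∑' u : Ioc a (projIcc a b hab s : ℝ), J u := by
  rw [cumulative, withDensityᵥ_count_apply hJ measurableSet_Iic, tsum_subtype, tsum_subtype,
    indicator_indicator, Iic_inter_Ioc_eq_Ioc_projIcc hab]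

theorem ae_preimage_eq_incSet_union_decSet [NullSingletonClass α.variation] (ht : 0 ≤ t)
    (hC : C.Countable) (hδ : δ.variation Cᶜ = 0)
    (hV : ∀ s, c + cumulative (δ + α) s = V (projIcc 0 t ht s)) :
    ∀ᵐ x, (fun s => c + cumulative (δ + α) s) ⁻¹' {x} = incSet V x t ∪ decSet V x t := by
  filter_upwards [(isCountingDisintegration_cumulative (α := α) hC hδ c).ae_forall_fiber
      (ae_crossesAt_cumulative hC hδ c), Measure.ae_ne volume (V 0), Measure.ae_ne volume (V t)]
    with x hcross hx0 hxt
  rw [incSet_union_decSet]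
  ext s
  refine ⟨fun hs => ?_, fun ⟨hs, hVs, _⟩ => ?_⟩
  · have hs_pos : 0 < s := by
      by_contra! hs0
      exact hx0 (hs.symm.trans ((hV s).trans (by rw [projIcc_of_le_left ht hs0])))
    have hs_lt : s < t := by
      by_contra! hts
      exact hxt (hs.symm.trans ((hV s).trans (by rw [projIcc_of_right_le ht hts])))
    have hV_nhds : (fun r => c + cumulative (δ + α) r) =ᶠ[nhds s] V := by
      filter_upwards [Icc_mem_nhds hs_pos hs_lt] with r hr
      rw [hV, projIcc_of_mem ht hr]
    exact ⟨⟨hs_pos, hs_lt.le⟩, hV_nhds.eq_of_nhds.symm.trans hs, (hcross s hs).congr hV_nhds⟩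
  · exact (hV s).trans (by rwa [projIcc_of_mem ht (Ioc_subset_Icc_self hs)])

theorem tsum_incSet_union_decSet_comp_mul {x : ℝ} (hfin : (incSet V x t ∪ decSet V x t).Finite)
    (f g : ℝ → ℝ) :
    ∑' s : ↥(incSet V x t ∪ decSet V x t), f (V s) * g s =
      (∑ᶠ s ∈ incSet V x t ∪ decSet V x t, g s) * f x := by
  have := hfin.to_subtype
  rw [tsum_eq_finsum (toFinite _),
    finsum_set_coe_eq_finsum_mem (f := fun s => f (V s) * g s), finsum_mem_mul' _ _ hfin]
  refine finsum_mem_congr rfl fun s hs => ?_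
  rw [incSet_union_decSet] at hs
  rw [hs.2.1, mul_comm]

end Passages

section Fubini

variable {V Vc Vd J : ℝ → ℝ} {t : ℝ}

theorem eq_const_add_cumulative_add (ht : 0 ≤ t)
    (hdecomp : ∀ s ∈ Icc 0 t, V s = Vc s + Vd s)
    (hVd : ∀ s ∈ Icc 0 t, HasSum (fun u : Ioc 0 s => J u) (Vd s))
    {μc : SignedMeasure ℝ} (hμc : ∀ s ∈ Icc 0 t, μc (Ioc 0 s) = Vc s - Vc 0) (s : ℝ) :
    V 0 + cumulative
      (Measure.count.withDensityᵥ ((Ioc 0 t).indicator J) + μc.restrict (Ioc 0 t)) s =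
      V (projIcc 0 t ht s) := by
  have hJ : Summable ((Ioc 0 t).indicator J) :=
    summable_subtype_iff_indicator.1 (hVd t (right_mem_Icc.2 ht)).summable
  have hs : (projIcc 0 t ht s : ℝ) ∈ Icc 0 t := (projIcc 0 t ht s).2
  have hVd0 : Vd 0 = 0 := by
    have : IsEmpty (Ioc (0 : ℝ) 0) := by simp
    exact (hVd 0 (left_mem_Icc.2 ht)).unique hasSum_empty
  rw [cumulative_add, cumulative_withDensityᵥ_count_indicator ht hJ, cumulative_restrict_Ioc _ ht,
    (hVd _ hs).tsum_eq, hμc _ hs, hdecomp _ hs, hdecomp 0 (left_mem_Icc.2 ht), hVd0]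
  ring

theorem continuous_cumulative_restrict_Ioc (ht : 0 ≤ t) (hVc : ContinuousOn Vc (Icc 0 t))
    {μc : SignedMeasure ℝ} (hμc : ∀ s ∈ Icc 0 t, μc (Ioc 0 s) = Vc s - Vc 0) :
    Continuous (cumulative (μc.restrict (Ioc 0 t))) := by
  have heq : cumulative (μc.restrict (Ioc 0 t)) = fun s => Vc (projIcc 0 t ht s) - Vc 0 :=
    funext fun s => (cumulative_restrict_Ioc μc ht s).trans (hμc _ (projIcc 0 t ht s).2)
  rw [heq]
  exact (hVc.domRestrict.comp continuous_projIcc).sub continuous_const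

theorem fubini_abs_local_time_general (ht : 0 ≤ t)
    (hdecomp : ∀ s ∈ Icc 0 t, V s = Vc s + Vd s) (hVc : ContinuousOn Vc (Icc 0 t))
    (hVd : ∀ s ∈ Icc 0 t, HasSum (fun u : Ioc 0 s => J u) (Vd s))
    {μc : SignedMeasure ℝ} (hμc : ∀ s ∈ Icc 0 t, μc (Ioc 0 s) = Vc s - Vc 0)
    {f g : ℝ → ℝ}
    (hfg : IntegrableOn (fun s => f (V s) * g s) (Ioc 0 t) μc.totalVariation) :
    (∀ᵐ x, (incSet V x t).Finite ∧ (decSet V x t).Finite) ∧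
      ∫ s in Ioc 0 t, f (V s) * g s ∂μc.totalVariation =
        ∫ x, (∑ᶠ s ∈ incSet V x t ∪ decSet V x t, g s) * f x := by
  have hJ : Summable ((Ioc 0 t).indicator J) :=
    summable_subtype_iff_indicator.1 (hVd t (right_mem_Icc.2 ht)).summable
  set δ := Measure.count.withDensityᵥ ((Ioc 0 t).indicator J)
  set α := μc.restrict (Ioc 0 t)
  have hC := hJ.countable_support
  have hδ : δ.variation _ = 0 := variation_withDensityᵥ_count_support_compl hJ
  have hα : α.variation = μc.totalVariation.restrict (Ioc 0 t) := by
    rw [SignedMeasure.totalVariation_eq_variation,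
      VectorMeasure.variation_restrict measurableSet_Ioc]
  have : IsFiniteMeasure α.variation := hα ▸ inferInstance
  have : NullSingletonClass α.variation :=
    nullSingletonClass_variation_of_continuous_cumulative α
      (continuous_cumulative_restrict_Ioc ht hVc hμc)
  have hdisint := isCountingDisintegration_cumulative (α := α) hC hδ (V 0)
  have hfiber := ae_preimage_eq_incSet_union_decSet (α := α) ht hC hδ
    (eq_const_add_cumulative_add ht hdecomp hVd hμc)
  have hfinite : ∀ᵐ x, (incSet V x t ∪ decSet V x t).Finite := by
    filter_upwards [hfiber, hdisint.ae_finite_fiber] with x hx hx_fin using hx ▸ hx_fin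
  refine ⟨hfinite.mono fun x => finite_union.1, ?_⟩
  rw [IntegrableOn, ← hα] at hfg
  rw [← hα, hdisint.integral_eq hfg]
  refine integral_congr_ae ?_
  filter_upwards [hfiber, hfinite] with x hx hx_fin
  rw [hx]
  exact tsum_incSet_union_decSet_comp_mul hx_fin f g

theorem aemeasurable_restrict_of_boundedVariationOn {μ : Measure ℝ} {s : Set ℝ}
    (hs : MeasurableSet s) (hV : BoundedVariationOn V s) : AEMeasurable V (μ.restrict s) := by
  obtain ⟨p, q, hp, hq, rfl⟩ := hV.locallyBoundedVariationOn.exists_monotoneOn_sub_monotoneOn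
  exact (aemeasurable_restrict_of_monotoneOn hs hp).sub (aemeasurable_restrict_of_monotoneOn hs hq)

theorem integrable_comp_mul {X Y : Type*} [MeasurableSpace X] [MeasurableSpace Y] {μ : Measure X}
    [IsFiniteMeasure μ] {U : X → Y} {f : Y → ℝ} {g : X → ℝ} (hU : AEMeasurable U μ)
    (hf : Measurable f) (hf_bdd : ∃ C, ∀ y, |f y| ≤ C)
    (hg : Measurable g) (hg_bdd : ∃ C, ∀ x, |g x| ≤ C) :
    Integrable (fun x => f (U x) * g x) μ := by
  obtain ⟨Cf, hCf⟩ := hf_bdd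
  obtain ⟨Cg, hCg⟩ := hg_bdd
  refine Integrable.of_bound
    ((hf.comp_aemeasurable hU).mul hg.aemeasurable).aestronglyMeasurable (Cf * Cg) ?_
  refine ae_of_all _ fun x => ?_
  rw [norm_mul]
  exact mul_le_mul (hCf _) (hCg _) (norm_nonneg _) ((abs_nonneg _).trans (hCf (U x)))

end Fubini

/-- Let `V` be càdlàg on `[0,∞)` with finite variation on compacts,
with canonical decomposition `V = Vc + Vd`, and let `μc` be the signed Stieltjes measure
of `Vc` on `[0,t]`, with total variation measure `|μc|`. For all bounded measurable
`f : ℝ → ℝ` and `g : [0,t] → ℝ`,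
`∫_0^t f(V s) g(s) |μc|(ds) = ∫_ℝ (∫_{[0,t]} g(s) λ^x(ds)) f(x) dx`, where for a.e. `x`
the point measure `λ^x(ds) = Σ_{s ∈ ℐ(x) ∪ 𝒟(x)} δ_s` places a unit atom at each passage
time, so that `∫_{[0,t]} g(s) λ^x(ds) = Σ_{s ∈ (0,t] ∩ (ℐ(x) ∪ 𝒟(x))} g(s)`. -/
theorem fubini_abs_local_time
    (V Vm Vc Vd : ℝ → ℝ)
    (hV_rc : ∀ s ∈ Set.Ici (0 : ℝ), ContinuousWithinAt V (Set.Ici s) s)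
    (hV_ll : ∀ s ∈ Set.Ioi (0 : ℝ),
      Filter.Tendsto V (nhdsWithin s (Set.Iio s)) (nhds (Vm s)))
    (hV_bv : ∀ T : ℝ, BoundedVariationOn V (Set.Icc 0 T))
    (hdecomp : ∀ s ∈ Set.Ici (0 : ℝ), V s = Vc s + Vd s)
    (hVc_cont : ContinuousOn Vc (Set.Ici 0))
    (hVc_bv : ∀ T : ℝ, BoundedVariationOn Vc (Set.Icc 0 T))
    (hVd_sum : ∀ s ∈ Set.Ici (0 : ℝ),
      HasSum (fun u : Set.Ioc (0 : ℝ) s => V u.1 - Vm u.1) (Vd s))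
    (hVd_abs : ∀ s ∈ Set.Ici (0 : ℝ),
      Summable (fun u : Set.Ioc (0 : ℝ) s => |V u.1 - Vm u.1|))
    (t : ℝ) (ht : 0 < t)
    (μc : MeasureTheory.SignedMeasure ℝ)
    (hμc : ∀ a b : ℝ, 0 ≤ a → a ≤ b → b ≤ t → μc (Set.Ioc a b) = Vc b - Vc a)
    (f g : ℝ → ℝ) (hf_meas : Measurable f) (hf_bdd : ∃ C : ℝ, ∀ y, |f y| ≤ C)
    (hg_meas : Measurable g) (hg_bdd : ∃ C : ℝ, ∀ s, |g s| ≤ C) :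
    (∀ᵐ x : ℝ ∂volume, (incSet V x t).Finite ∧ (decSet V x t).Finite) ∧
      (∫ s in Set.Ioc (0 : ℝ) t, f (V s) * g s ∂μc.totalVariation) =
        ∫ x : ℝ, (∑ᶠ s ∈ (incSet V x t ∪ decSet V x t), g s) * f x ∂volume :=
  fubini_abs_local_time_general (J := fun u => V u - Vm u) ht.le
    (fun s hs => hdecomp s hs.1) (hVc_cont.mono Icc_subset_Ici_self) (fun s hs => hVd_sum s hs.1)
    (fun s hs => hμc 0 s le_rfl hs.1 hs.2)
    (integrable_comp_mul (aemeasurable_restrict_of_boundedVariationOn measurableSet_Ioc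
      ((hV_bv t).mono Ioc_subset_Icc_self)) hf_meas hf_bdd hg_meas hg_bdd)
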